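/- arXiv:math-ph/0008007 — 5 statements merged into one kernel-verified Lean document; each statement's English description precedes it below -/
import Mathlib

section
/- For every sequence c : ℕ → ℂ with c 0 = 1, the linear map Φ_c : ℂ[x,p] → End_ℂ(V) defined on the monomial basis by Φ_c(p^m x^n) = Σ_{s=0}^{min(m,n)} (−1)^s · (m!·n!/(s!·(m−s)!·(n−s)!)) · c_s · ħ^s · F^{(m−s,n−s)} satisfies, for every polynomial A ∈ ℂ[x,p], the modified Dirac quantization rules: a† ∘ Φ_c(A) − Φ_c(A) ∘ a† = iħ · Φ_c(∂_p A) and (−iħ·a) ∘ Φ_c(A) − Φ_c(A) ∘ (−iħ·a) = −iħ · Φ_c(∂_x A). (Here {x,A}_P = ∂_p A and {p,A}_P = −∂_x A are the Poisson brackets with the coordinate functions.) -/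
open Complex MvPolynomial Finset

noncomputable section

/-- The standard basis vector `e n` of `V = ℕ →₀ ℂ`. -/
def e (n : ℕ) : ℕ →₀ ℂ := Finsupp.single n 1

/-- The destruction operator `a`: `a (e 0) = 0`, `a (e (n+1)) = √(n+1) • e n`. -/
def aop : (ℕ →₀ ℂ) →ₗ[ℂ] (ℕ →₀ ℂ) :=
  Finsupp.lsum ℂ fun n => match n with
    | 0 => 0
    | k + 1 => ((Real.sqrt (k + 1) : ℝ) : ℂ) • Finsupp.lsingle k

/-- The creation operator `a†`: `a† (e n) = √(n+1) • e (n+1)`. -/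
def adop : (ℕ →₀ ℂ) →ₗ[ℂ] (ℕ →₀ ℂ) :=
  Finsupp.lsum ℂ fun n => ((Real.sqrt (n + 1) : ℝ) : ℂ) • Finsupp.lsingle (n + 1)

/-- `F^{(m,n)} = (−iℏ·a)^m ∘ (a†)^n` as an element of `End_ℂ(V)`. -/
def F (ℏ : ℝ) (m n : ℕ) : Module.End ℂ (ℕ →₀ ℂ) :=
  ((-(Complex.I * ℏ)) • (aop : Module.End ℂ (ℕ →₀ ℂ))) ^ m * (adop : Module.End ℂ (ℕ →₀ ℂ)) ^ n

/-- The polynomial algebra ℂ[x,p] in two commuting variables. -/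
abbrev Pxp := MvPolynomial (Fin 2) ℂ

/-- The variable `x`. -/
def xv : Pxp := X 0
/-- The variable `p`. -/
def pv : Pxp := X 1

/-- The partial derivative `∂_x` as a linear endomorphism. -/
def Dx : Module.End ℂ Pxp := (pderiv (0 : Fin 2)).toLinearMap
/-- The partial derivative `∂_p` as a linear endomorphism. -/
def Dp : Module.End ℂ Pxp := (pderiv (1 : Fin 2)).toLinearMap

lemma aop_zero : aop (Finsupp.single 0 1) = 0 := by
  simp [aop]

lemma aop_succ (k : ℕ) (z : ℂ) : aop (Finsupp.single (k + 1) z) =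
    Finsupp.single k (((Real.sqrt (k + 1) : ℝ) : ℂ) * z) := by
  simp [aop]

lemma adop_single (k : ℕ) (z : ℂ) : adop (Finsupp.single k z) =
    Finsupp.single (k + 1) (((Real.sqrt (k + 1) : ℝ) : ℂ) * z) := by
  simp [adop]

lemma sqrt_mul_self' (k : ℕ) :
    ((Real.sqrt (k + 1) : ℝ) : ℂ) * ((Real.sqrt (k + 1) : ℝ) : ℂ) = (k : ℂ) + 1 := by
  rw [← Complex.ofReal_mul, Real.mul_self_sqrt (by positivity)]
  push_cast
  rfl

lemma comm_a : (aop : Module.End ℂ (ℕ →₀ ℂ)) * adop = adop * aop + 1 := by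
  apply Finsupp.lhom_ext'
  intro n
  apply LinearMap.ext_ring
  rcases n with _ | k
  · have h := sqrt_mul_self' 0
    simp only [LinearMap.comp_apply, Finsupp.lsingle_apply, LinearMap.add_apply,
      Module.End.mul_apply, Module.End.one_apply, aop_zero, adop_single, aop_succ, map_zero]
    simp
  · have h := sqrt_mul_self' k
    have h' := sqrt_mul_self' (k + 1)
    simp only [LinearMap.comp_apply, Finsupp.lsingle_apply, LinearMap.add_apply,
      Module.End.mul_apply, Module.End.one_apply, adop_single, aop_succ]
    rw [← Finsupp.single_add]
    congr 1
    rw [← mul_assoc, ← mul_assoc, h, h']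
    push_cast
    ring

abbrev Pop (ℏ : ℝ) : Module.End ℂ (ℕ →₀ ℂ) := (-(Complex.I * ℏ)) • (aop : Module.End ℂ (ℕ →₀ ℂ))

abbrev Xop : Module.End ℂ (ℕ →₀ ℂ) := adop

lemma comm_P (ℏ : ℝ) : (adop : Module.End ℂ (ℕ →₀ ℂ)) * Pop ℏ =
    Pop ℏ * adop + (Complex.I * ℏ) • (1 : Module.End ℂ (ℕ →₀ ℂ)) := by
  rw [Pop, mul_smul_comm, smul_mul_assoc, comm_a]
  module

lemma gen_left {R : Type*} [Ring R] [Algebra ℂ R] (x p : R) (z : ℂ)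
    (h : x * p = p * x + z • (1 : R)) (m : ℕ) :
    x * p ^ m = p ^ m * x + (z * m) • p ^ (m - 1) := by
  induction m with
  | zero => simp
  | succ m ih =>
    rw [pow_succ, ← mul_assoc, ih, add_mul, mul_assoc, h, mul_add, smul_mul_assoc]
    rcases m with _ | m
    · simp
    · simp only [Nat.add_sub_cancel, ← pow_succ, mul_smul_comm, mul_one, ← mul_assoc]
      push_cast
      module

lemma comm_F1 {R : Type*} [Ring R] [Algebra ℂ R] (x p : R) (z : ℂ)
    (h : x * p = p * x + z • (1 : R)) (m n : ℕ) :
    x * (p ^ m * x ^ n) - (p ^ m * x ^ n) * x = (z * m) • (p ^ (m - 1) * x ^ n) := by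
  have h := gen_left _ _ _ h m
  rw [← mul_assoc, h, mul_assoc _ _ x, ← pow_succ, pow_succ', add_mul, smul_mul_assoc,
    mul_assoc, add_sub_cancel_left]

lemma comm_F2 {R : Type*} [Ring R] [Algebra ℂ R] (x p : R) (z : ℂ)
    (h : x * p = p * x + z • (1 : R)) (m n : ℕ) :
    p * (p ^ m * x ^ n) - (p ^ m * x ^ n) * p = (-z * n) • (p ^ m * x ^ (n - 1)) := by
  have h := gen_left p x (-z) (by rw [h]; module) n
  rw [← mul_assoc, ← pow_succ', mul_assoc (p ^ m), eq_sub_of_add_eq h.symm, mul_sub, mul_smul_comm,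
    ← mul_assoc, ← pow_succ]
  abel

/-- Normalised coefficient. -/
def cf (ℏ : ℝ) (c : ℕ → ℂ) (m n s : ℕ) : ℂ :=
  (-1 : ℂ) ^ s * ((m.choose s : ℂ) * (n.choose s) * s.factorial) * c s * (ℏ : ℂ) ^ s

lemma choose_id (m s : ℕ) : ((m.choose s : ℂ)) * (m - s : ℕ) = m * ((m - 1).choose s : ℂ) := by
  rcases m with _ | m
  · simp
  · have := Nat.choose_mul_succ_eq m s
    rw [Nat.add_sub_cancel, mul_comm ((m + 1 : ℕ) : ℂ)]
    exact_mod_cast this.symm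

lemma sum_ext (ℏ : ℝ) (c : ℕ → ℂ) (Φ : Pxp →ₗ[ℂ] Module.End ℂ (ℕ →₀ ℂ))
    (hΦ : ∀ m n : ℕ, Φ (pv ^ m * xv ^ n) =
      ∑ s ∈ Finset.range (min m n + 1),
        ((-1 : ℂ) ^ s *
            ((m.factorial * n.factorial : ℂ) /
              (s.factorial * (m - s).factorial * (n - s).factorial)) *
            c s * (ℏ : ℂ) ^ s) • F ℏ (m - s) (n - s)) (m n N : ℕ) (hN : min m n + 1 ≤ N) :
    Φ (pv ^ m * xv ^ n) = ∑ s ∈ Finset.range N, cf ℏ c m n s • F ℏ (m - s) (n - s) := by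
  rw [hΦ, ← Finset.sum_subset (Finset.range_mono hN)]
  · apply Finset.sum_congr rfl
    intro s hs
    rw [Finset.mem_range] at hs
    have h1 : s ≤ m := by omega
    have h2 : s ≤ n := by omega
    congr 1
    unfold cf
    rw [Nat.cast_choose ℂ h1, Nat.cast_choose ℂ h2]
    have := Nat.cast_ne_zero (R := ℂ).2 s.factorial_ne_zero
    have := Nat.cast_ne_zero (R := ℂ).2 (m - s).factorial_ne_zero
    have := Nat.cast_ne_zero (R := ℂ).2 (n - s).factorial_ne_zero
    field_simp
  · intro s _ hs
    rw [Finset.mem_range] at hs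
    have : m.choose s = 0 ∨ n.choose s = 0 := by
      rcases le_total m n with h | h
      · left; exact Nat.choose_eq_zero_of_lt (by omega)
      · right; exact Nat.choose_eq_zero_of_lt (by omega)
    rcases this with h | h <;> simp [cf, h]

lemma Dp_mono (m n : ℕ) : Dp (pv ^ m * xv ^ n) = (m : ℂ) • (pv ^ (m - 1) * xv ^ n) := by
  simp [Dp, pv, xv, Derivation.leibniz, Derivation.leibniz_pow, pderiv_X, MvPolynomial.smul_eq_C_mul]
  ring

lemma Dx_mono (m n : ℕ) : Dx (pv ^ m * xv ^ n) = (n : ℂ) • (pv ^ m * xv ^ (n - 1)) := by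
  simp [Dx, pv, xv, Derivation.leibniz, Derivation.leibniz_pow, pderiv_X, MvPolynomial.smul_eq_C_mul]
  ring

lemma core {R : Type*} [Ring R] [Algebra ℂ R] (ℏ : ℝ) (c : ℕ → ℂ) (x p : R) (z : ℂ)
    (h : x * p = p * x + z • (1 : R)) (Φ : Pxp →ₗ[ℂ] R)
    (E : ∀ m n N : ℕ, min m n + 1 ≤ N → Φ (pv ^ m * xv ^ n) =
      ∑ s ∈ Finset.range N, cf ℏ c m n s • (p ^ (m - s) * x ^ (n - s))) :
    ∀ A : Pxp, x * Φ A - Φ A * x = z • Φ (Dp A) ∧ p * Φ A - Φ A * p = (-z) • Φ (Dx A) := by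
  have key : ∀ m n : ℕ,
      (x * Φ (pv ^ m * xv ^ n) - Φ (pv ^ m * xv ^ n) * x =
        z • Φ (Dp (pv ^ m * xv ^ n))) ∧
      (p * Φ (pv ^ m * xv ^ n) - Φ (pv ^ m * xv ^ n) * p =
        (-z) • Φ (Dx (pv ^ m * xv ^ n))) := by
    intro m n
    rw [Dp_mono, Dx_mono, map_smul, map_smul, E m n (m + n + 1) (by omega),
      E (m - 1) n (m + n + 1) (by omega), E m (n - 1) (m + n + 1) (by omega)]
    simp only [Finset.mul_sum, Finset.sum_mul, ← Finset.sum_sub_distrib, Finset.smul_sum,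
      mul_smul_comm, smul_mul_assoc, ← smul_sub, comm_F1 x p z h, comm_F2 x p z h, smul_smul]
    constructor
    · apply Finset.sum_congr rfl
      intro s _
      rw [Nat.sub_right_comm]
      congr 1
      unfold cf
      linear_combination ((-1 : ℂ) ^ s * (n.choose s) * s.factorial * c s * (ℏ : ℂ) ^ s *
        z) * choose_id m s
    · apply Finset.sum_congr rfl
      intro s _
      rw [Nat.sub_right_comm n]
      congr 1
      unfold cf
      linear_combination (-(-1 : ℂ) ^ s * (m.choose s) * s.factorial * c s * (ℏ : ℂ) ^ s *
        z) * choose_id n s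
  intro A
  induction A using MvPolynomial.induction_on' with
  | monomial u w =>
    have hm : (monomial u w : Pxp) = w • (pv ^ (u 1) * xv ^ (u 0)) := by
      rw [MvPolynomial.monomial_eq, Finsupp.prod_fintype _ _ (by simp), Fin.prod_univ_two,
        MvPolynomial.smul_eq_C_mul, pv, xv, mul_comm (X 1 ^ _)]
    obtain ⟨h1, h2⟩ := key (u 1) (u 0)
    rw [hm]
    simp only [map_smul, mul_smul_comm, smul_mul_assoc, ← smul_sub, h1, h2]
    exact ⟨smul_comm _ _ _, smul_comm _ _ _⟩
  | add f g hp hq =>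
    simp only [map_add, mul_add, add_mul, smul_add]
    rw [← hp.1, ← hq.1, ← hp.2, ← hq.2]
    constructor <;> abel

/-- for every sequence `c` with `c 0 = 1`, the linear map `Φ_c` defined on the
monomial basis by `Φ_c(p^m x^n) = Σ_{s=0}^{min(m,n)} (−1)^s (m!n!/(s!(m−s)!(n−s)!)) c_s ℏ^s
F^{(m−s,n−s)}` satisfies the modified Dirac quantization rules. -/
theorem stmt0 (ℏ : ℝ) (hℏ : ℏ ≠ 0) (c : ℕ → ℂ) (hc : c 0 = 1)
    (Φ : Pxp →ₗ[ℂ] Module.End ℂ (ℕ →₀ ℂ))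
    (hΦ : ∀ m n : ℕ, Φ (pv ^ m * xv ^ n) =
      ∑ s ∈ Finset.range (min m n + 1),
        ((-1 : ℂ) ^ s *
            ((m.factorial * n.factorial : ℂ) /
              (s.factorial * (m - s).factorial * (n - s).factorial)) *
            c s * (ℏ : ℂ) ^ s) • F ℏ (m - s) (n - s)) :
    ∀ A : Pxp,
      (adop : Module.End ℂ (ℕ →₀ ℂ)) * Φ A - Φ A * (adop : Module.End ℂ (ℕ →₀ ℂ)) =
        (Complex.I * ℏ) • Φ (Dp A) ∧
      ((-(Complex.I * ℏ)) • (aop : Module.End ℂ (ℕ →₀ ℂ))) * Φ A -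
          Φ A * ((-(Complex.I * ℏ)) • (aop : Module.End ℂ (ℕ →₀ ℂ))) =
        (-(Complex.I * ℏ)) • Φ (Dx A) := by
  have h1 : Xop * Pop ℏ = Pop ℏ * Xop + (Complex.I * ℏ) • (1 : Module.End ℂ (ℕ →₀ ℂ)) := comm_P ℏ
  have h2 : ∀ m n N : ℕ, min m n + 1 ≤ N → Φ (pv ^ m * xv ^ n) =
      ∑ s ∈ Finset.range N, cf ℏ c m n s • (Pop ℏ ^ (m - s) * Xop ^ (n - s)) :=
    sum_ext ℏ c Φ hΦ
  have h3 := core ℏ c Xop (Pop ℏ) (Complex.I * ℏ) h1 Φ h2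
  intro A
  refine ⟨?_, ?_⟩
  · exact (h3 A).1
  · exact (h3 A).2

end
end

section
/- Suppose g : ℕ × ℕ × ℕ → ℂ satisfies g(m,n,0) = 1 for all m,n, and the linear map Φ : ℂ[x,p] → End_ℂ(V) defined on the monomial basis by Φ(p^m x^n) = Σ_{s=0}^{min(m,n)} g(m,n,s) · ħ^s · F^{(m−s,n−s)} satisfies, for every polynomial A, both a† ∘ Φ(A) − Φ(A) ∘ a† = iħ · Φ(∂_p A) and (−iħ·a) ∘ Φ(A) − Φ(A) ∘ (−iħ·a) = −iħ · Φ(∂_x A). Then there exists a sequence c : ℕ → ℂ with c 0 = 1 such that g(m,n,s) = (−1)^s · (m!·n!/(s!·(m−s)!·(n−s)!)) · c_s for all m, n and all s ≤ min(m,n). -/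
open Complex MvPolynomial Finset

noncomputable section

lemma comm_aop : (aop : Module.End ℂ (ℕ →₀ ℂ)) * (adop : Module.End ℂ (ℕ →₀ ℂ)) - (adop : Module.End ℂ (ℕ →₀ ℂ)) * (aop : Module.End ℂ (ℕ →₀ ℂ)) = 1 := by
  apply Finsupp.lhom_ext
  intro n b
  have h : ∀ k : ℕ, ((Real.sqrt (k + 1) : ℝ) : ℂ) * ((Real.sqrt (k + 1) : ℝ) : ℂ) = k + 1 := by
    intro k
    rw [← Complex.ofReal_mul, Real.mul_self_sqrt (by positivity)]
    push_cast
    rfl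
  rcases n with _ | n
  · simp [aop, adop, -Finsupp.single_mul]
  · have h1 := h n
    have h2 := h (n + 1)
    simp [aop, adop, -Finsupp.single_mul] at h1 h2 ⊢
    rw [← Finsupp.single_sub, ← mul_assoc, ← mul_assoc, h1, h2]
    congr 1
    ring

lemma comm_pow {R : Type*} [Ring R] [Algebra ℂ R] (X P : R) (k : ℂ) (h : X * P - P * X = k • (1 : R)) (m : ℕ) :
    X * P ^ m - P ^ m * X = (k * m) • P ^ (m - 1) := by
  induction m with
  | zero => simp
  | succ m ih =>
    have : X * P ^ (m + 1) - P ^ (m + 1) * X = (X * P ^ m - P ^ m * X) * P + P ^ m * (X * P - P * X) := by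
      noncomm_ring
    rw [this, ih, h]
    rcases m with _ | m
    · simp
    · simp only [Nat.add_sub_cancel, smul_mul_assoc, mul_smul_comm, mul_one, ← pow_succ, ← add_smul]
      congr 1
      push_cast
      ring

lemma adop_pow_ne (n : ℕ) : (adop : Module.End ℂ (ℕ →₀ ℂ)) ^ n ≠ 0 := by
  intro h
  have key : ∀ n : ℕ, ∃ b : ℂ, b ≠ 0 ∧
      ((adop : Module.End ℂ (ℕ →₀ ℂ)) ^ n) (Finsupp.single 0 1) = Finsupp.single n b := by
    intro n
    induction n with
    | zero => exact ⟨1, one_ne_zero, by simp⟩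
    | succ n ih =>
      obtain ⟨b, hb, hn⟩ := ih
      refine ⟨((Real.sqrt (n + 1) : ℝ) : ℂ) * b, mul_ne_zero ?_ hb, ?_⟩
      · rw [Complex.ofReal_ne_zero]
        positivity
      · rw [pow_succ', Module.End.mul_apply, hn]
        simp [adop]
  obtain ⟨b, hb, hn⟩ := key n
  have h2 := congrArg (fun T : Module.End ℂ (ℕ →₀ ℂ) => T (Finsupp.single 0 1)) h
  simp [hn] at h2
  exact hb h2

def FF {R : Type*} [Ring R] (P X : R) (m n : ℕ) : R := P ^ m * X ^ n

lemma adX_F {R : Type*} [Ring R] [Algebra ℂ R] (ℏ : ℝ) (X P : R) (hc : X * P - P * X = (Complex.I * ℏ) • (1 : R)) (m n : ℕ) : X * FF P X m n - FF P X m n * X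
    = (Complex.I * ℏ * m) • FF P X (m - 1) n := by
  unfold FF
  rw [← smul_mul_assoc, ← comm_pow _ _ _ hc m, sub_mul, mul_assoc, mul_assoc, mul_assoc,
    ← pow_succ, ← pow_succ']

lemma adP_F {R : Type*} [Ring R] [Algebra ℂ R] (ℏ : ℝ) (X P : R) (hc : X * P - P * X = (Complex.I * ℏ) • (1 : R)) (m n : ℕ) : P * FF P X m n
    - FF P X m n * P
    = (-(Complex.I * ℏ) * n) • FF P X m (n - 1) := by
  have h : P * X
    - X * P
    = (-(Complex.I * ℏ)) • (1 : R) := by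
    rw [neg_smul _ (1 : R), ← hc]
    abel
  unfold FF
  rw [← mul_smul_comm, ← comm_pow _ _ _ h n, mul_sub, ← mul_assoc, ← mul_assoc, ← mul_assoc,
    ← pow_succ, ← pow_succ']

lemma F_indep {R : Type*} [Ring R] [Algebra ℂ R] (ℏ : ℝ) (X P : R) (hc : X * P - P * X = (Complex.I * ℏ) • (1 : R))
    (hX : ∀ n : ℕ, X ^ n ≠ 0) (hℏ : ℏ ≠ 0) (f : ℕ → ℕ) : ∀ (N : ℕ) (S : Finset ℕ) (u : ℕ → ℕ) (d : ℕ → ℂ),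
    (∀ s ∈ S, u s < N) → (∀ s ∈ S, ∀ t ∈ S, u s = u t → s = t) →
    ∑ s ∈ S, d s • FF P X (u s) (f s) = 0 → ∀ s ∈ S, d s = 0 := by
  intro N
  induction N with
  | zero => intro S u d h _ _ s hs; exact absurd (h s hs) (by omega)
  | succ N ih =>
    intro S u d hN hinj hsum
    have hI : (Complex.I * ℏ : ℂ) ≠ 0 := mul_ne_zero Complex.I_ne_zero (by exact_mod_cast hℏ)
    have hcomm : ∑ s ∈ S, (d s * (Complex.I * ℏ * u s)) • FF P X (u s - 1) (f s) = 0 := by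
      have : ∑ s ∈ S, (d s * (Complex.I * ℏ * u s)) • FF P X (u s - 1) (f s) =
          X * (∑ s ∈ S, d s • FF P X (u s) (f s))
            - (∑ s ∈ S, d s • FF P X (u s) (f s)) * X := by
        rw [Finset.mul_sum, Finset.sum_mul, ← Finset.sum_sub_distrib]
        refine Finset.sum_congr rfl fun s _ => ?_
        rw [mul_smul_comm, smul_mul_assoc, ← smul_sub, adX_F ℏ X P hc, smul_smul]
      rw [this, hsum]
      simp
    have hpos : ∀ s ∈ S, u s ≠ 0 → d s = 0 := by
      intro s hs hus
      have := ih (S.filter fun s => u s ≠ 0) (fun s => u s - 1)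
        (fun s => d s * (Complex.I * ℏ * u s)) ?_ ?_ ?_ s (by simp [hs, hus])
      · have h3 : (Complex.I * ℏ * u s : ℂ) ≠ 0 := mul_ne_zero hI (by exact_mod_cast hus)
        exact (mul_eq_zero.mp this).resolve_right h3
      · intro s hs
        rw [Finset.mem_filter] at hs
        have := hN s hs.1
        have := hs.2
        show u s - 1 < N
        omega
      · intro s hs t ht h
        rw [Finset.mem_filter] at hs ht
        refine hinj s hs.1 t ht.1 ?_
        have := hs.2
        have := ht.2
        have h' : u s - 1 = u t - 1 := h
        omega
      · rw [← hcomm]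
        refine Finset.sum_subset (Finset.filter_subset _ _) ?_
        intro s hs hs'
        have : u s = 0 := by
          by_contra h
          exact hs' (by simp [hs, h])
        simp [this]
    intro s hs
    by_cases hus : u s = 0
    · rw [Finset.sum_eq_single s] at hsum
      · rw [hus] at hsum
        exact (smul_eq_zero.mp hsum).resolve_right (by simpa [FF] using hX _)
      · intro t ht hts
        have : u t ≠ 0 := fun h => hts (hinj t ht s hs (by omega))
        rw [hpos t ht this, zero_smul]
      · intro h; exact absurd hs h
    · exact hpos s hs hus

lemma Dp_mon (m n : ℕ) : Dp (pv ^ (m + 1) * xv ^ n) = ((m : ℂ) + 1) • (pv ^ m * xv ^ n) := by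
  simp [Dp, pv, xv, pderiv_X, Derivation.leibniz_pow, MvPolynomial.smul_eq_C_mul]
  ring

lemma Dx_mon (m n : ℕ) : Dx (pv ^ m * xv ^ (n + 1)) = ((n : ℂ) + 1) • (pv ^ m * xv ^ n) := by
  simp [Dx, pv, xv, pderiv_X, Derivation.leibniz_pow, MvPolynomial.smul_eq_C_mul]
  ring

theorem core_s1 {R : Type*} [Ring R] [Algebra ℂ R] (ℏ : ℝ) (X P : R) (hc : X * P - P * X = (Complex.I * ℏ) • (1 : R))
    (hX : ∀ n : ℕ, X ^ n ≠ 0) (hℏ : ℏ ≠ 0) (g : ℕ × ℕ × ℕ → ℂ)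
    (hg : ∀ m n : ℕ, g (m, n, 0) = 1)
    (Φ : Pxp → R) (hsm : ∀ (k : ℂ) (A : Pxp), Φ (k • A) = k • Φ A)
    (hΦ : ∀ m n : ℕ, Φ (pv ^ m * xv ^ n) =
      ∑ s ∈ Finset.range (min m n + 1), (g (m, n, s) * (ℏ : ℂ) ^ s) • FF P X (m - s) (n - s))
    (hx : ∀ A : Pxp, X * Φ A - Φ A * X = (Complex.I * ℏ) • Φ (Dp A))
    (hp : ∀ A : Pxp, P * Φ A - Φ A * P = (-(Complex.I * ℏ)) • Φ (Dx A)) :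
    ∃ c : ℕ → ℂ, c 0 = 1 ∧ ∀ m n s : ℕ, s ≤ min m n →
      g (m, n, s) = (-1 : ℂ) ^ s *
        ((m.factorial * n.factorial : ℂ) /
          (s.factorial * (m - s).factorial * (n - s).factorial)) * c s := by
  have hI : (Complex.I * ℏ : ℂ) ≠ 0 := mul_ne_zero Complex.I_ne_zero (by exact_mod_cast hℏ)
  have hh : (ℏ : ℂ) ≠ 0 := by exact_mod_cast hℏ
  have recm : ∀ m n s : ℕ, s ≤ min m n →
      ((m + 1 - s : ℕ) : ℂ) * g (m + 1, n, s) = ((m : ℂ) + 1) * g (m, n, s) := by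
    intro m n s hs
    have h := hx (pv ^ (m + 1) * xv ^ n)
    rw [Dp_mon, hsm, hΦ, hΦ, Finset.mul_sum, Finset.sum_mul, ← Finset.sum_sub_distrib,
      Finset.smul_sum, Finset.smul_sum,
      ← Finset.sum_subset (s₁ := Finset.range (min m n + 1))
        (by intro a; simp only [Finset.mem_range]; omega) ?_, ← sub_eq_zero,
      ← Finset.sum_sub_distrib] at h
    · have := F_indep ℏ X P hc hX hℏ (fun s => n - s) (m + 1) (Finset.range (min m n + 1)) (fun s => m - s)
        (fun s => (Complex.I * ℏ * (ℏ : ℂ) ^ s) *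
          (((m + 1 - s : ℕ) : ℂ) * g (m + 1, n, s) - ((m : ℂ) + 1) * g (m, n, s)))
        (by intro s hs; show m - s < m + 1; omega)
        (by intro s hs t ht h; simp only [Finset.mem_range] at hs ht h; omega) ?_ s
        (by simp only [Finset.mem_range]; omega)
      · exact sub_eq_zero.mp ((mul_eq_zero.mp this).resolve_left (mul_ne_zero hI (pow_ne_zero _ hh)))
      · rw [← h]
        refine Finset.sum_congr rfl fun s _ => ?_
        rw [mul_smul_comm, smul_mul_assoc, ← smul_sub, adX_F ℏ X P hc, smul_smul, smul_smul, smul_smul,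
          show m + 1 - s - 1 = m - s by omega, ← sub_smul]
        congr 1
        ring
    · intro t ht ht'
      simp only [Finset.mem_range] at ht ht'
      rw [mul_smul_comm, smul_mul_assoc, ← smul_sub, adX_F ℏ X P hc, show m + 1 - t = 0 by omega]
      simp
  have recn : ∀ m n s : ℕ, s ≤ min m n →
      ((n + 1 - s : ℕ) : ℂ) * g (m, n + 1, s) = ((n : ℂ) + 1) * g (m, n, s) := by
    intro m n s hs
    have h := hp (pv ^ m * xv ^ (n + 1))
    rw [Dx_mon, hsm, hΦ, hΦ, Finset.mul_sum, Finset.sum_mul, ← Finset.sum_sub_distrib,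
      Finset.smul_sum, Finset.smul_sum,
      ← Finset.sum_subset (s₁ := Finset.range (min m n + 1))
        (by intro a; simp only [Finset.mem_range]; omega) ?_, ← sub_eq_zero,
      ← Finset.sum_sub_distrib] at h
    · have := F_indep ℏ X P hc hX hℏ (fun s => n - s) (m + 1) (Finset.range (min m n + 1)) (fun s => m - s)
        (fun s => (-(Complex.I * ℏ) * (ℏ : ℂ) ^ s) *
          (((n + 1 - s : ℕ) : ℂ) * g (m, n + 1, s) - ((n : ℂ) + 1) * g (m, n, s)))
        (by intro s hs; show m - s < m + 1; omega)
        (by intro s hs t ht h; simp only [Finset.mem_range] at hs ht h; omega) ?_ s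
        (by simp only [Finset.mem_range]; omega)
      · exact sub_eq_zero.mp ((mul_eq_zero.mp this).resolve_left
          (mul_ne_zero (neg_ne_zero.mpr hI) (pow_ne_zero _ hh)))
      · rw [← h]
        refine Finset.sum_congr rfl fun s _ => ?_
        rw [mul_smul_comm, smul_mul_assoc, ← smul_sub, adP_F ℏ X P hc, smul_smul, smul_smul, smul_smul,
          show n + 1 - s - 1 = n - s by omega, ← sub_smul]
        congr 1
        ring
    · intro t ht ht'
      simp only [Finset.mem_range] at ht ht'
      rw [mul_smul_comm, smul_mul_assoc, ← smul_sub, adP_F ℏ X P hc, show n + 1 - t = 0 by omega]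
      simp
  have hfac : ∀ k : ℕ, (k.factorial : ℂ) ≠ 0 := fun k => by exact_mod_cast k.factorial_ne_zero
  have stepm : ∀ s i : ℕ, (s.factorial * i.factorial : ℂ) * g (s + i, s, s) =
      (s + i).factorial * g (s, s, s) := by
    intro s i
    induction i with
    | zero => simp
    | succ i ih =>
      have h := recm (s + i) s s (by simp)
      rw [show s + i + 1 - s = i + 1 by omega] at h
      rw [← add_assoc, Nat.factorial_succ, Nat.factorial_succ]
      push_cast at h ⊢
      linear_combination (s.factorial * i.factorial : ℂ) * h + ((s : ℂ) + i + 1) * ih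
  have stepn : ∀ s i j : ℕ, (s.factorial * j.factorial : ℂ) * g (s + i, s + j, s) =
      (s + j).factorial * g (s + i, s, s) := by
    intro s i j
    induction j with
    | zero => simp
    | succ j ih =>
      have h := recn (s + i) (s + j) s (by simp)
      rw [show s + j + 1 - s = j + 1 by omega] at h
      rw [← add_assoc, Nat.factorial_succ, Nat.factorial_succ]
      push_cast at h ⊢
      linear_combination (s.factorial * j.factorial : ℂ) * h + ((s : ℂ) + j + 1) * ih
  refine ⟨fun s => (-1) ^ s * g (s, s, s) / s.factorial, by simp [hg], ?_⟩
  intro m n s hs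
  obtain ⟨i, rfl⟩ := Nat.exists_eq_add_of_le (hs.trans (min_le_left _ _))
  obtain ⟨j, rfl⟩ := Nat.exists_eq_add_of_le (hs.trans (min_le_right _ _))
  have h1 := stepm s i
  have h2 := stepn s i j
  have hs1 := hfac s
  have hi1 := hfac i
  have hj1 := hfac j
  have hsgn : ((-1 : ℂ) ^ s) * (-1) ^ s = 1 := by rw [← mul_pow]; simp
  rw [Nat.add_sub_cancel_left, Nat.add_sub_cancel_left]
  have e2 : g (s + i, s + j, s) = (s + j).factorial * g (s + i, s, s) / (s.factorial * j.factorial) := by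
    rw [eq_div_iff (mul_ne_zero hs1 hj1), ← h2]; ring
  have e1 : g (s + i, s, s) = (s + i).factorial * g (s, s, s) / (s.factorial * i.factorial) := by
    rw [eq_div_iff (mul_ne_zero hs1 hi1), ← h1]; ring
  rw [e2, e1]
  calc _ = (((-1 : ℂ) ^ s) * (-1) ^ s) * (((s + j).factorial : ℂ) * ((s + i).factorial * g (s, s, s) / (s.factorial * i.factorial)) / (s.factorial * j.factorial)) := by rw [hsgn, one_mul]
    _ = _ := by
      field_simp

/-- if `g(m,n,0) = 1` and the linear map `Φ` defined on the monomial basis by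
`Φ(p^m x^n) = Σ_{s=0}^{min(m,n)} g(m,n,s) ℏ^s F^{(m−s,n−s)}` satisfies the modified Dirac
quantization rules, then `g(m,n,s) = (−1)^s (m!n!/(s!(m−s)!(n−s)!)) c_s` for some sequence `c`
with `c 0 = 1`. -/
theorem stmt1 (ℏ : ℝ) (hℏ : ℏ ≠ 0) (g : ℕ × ℕ × ℕ → ℂ)
    (hg : ∀ m n : ℕ, g (m, n, 0) = 1)
    (Φ : Pxp →ₗ[ℂ] Module.End ℂ (ℕ →₀ ℂ))
    (hΦ : ∀ m n : ℕ, Φ (pv ^ m * xv ^ n) =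
      ∑ s ∈ Finset.range (min m n + 1), (g (m, n, s) * (ℏ : ℂ) ^ s) • F ℏ (m - s) (n - s))
    (hx : ∀ A : Pxp,
      (adop : Module.End ℂ (ℕ →₀ ℂ)) * Φ A - Φ A * (adop : Module.End ℂ (ℕ →₀ ℂ)) =
        (Complex.I * ℏ) • Φ (Dp A))
    (hp : ∀ A : Pxp,
      ((-(Complex.I * ℏ)) • (aop : Module.End ℂ (ℕ →₀ ℂ))) * Φ A -
          Φ A * ((-(Complex.I * ℏ)) • (aop : Module.End ℂ (ℕ →₀ ℂ))) =
        (-(Complex.I * ℏ)) • Φ (Dx A)) :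
    ∃ c : ℕ → ℂ, c 0 = 1 ∧ ∀ m n s : ℕ, s ≤ min m n →
      g (m, n, s) = (-1 : ℂ) ^ s *
        ((m.factorial * n.factorial : ℂ) /
          (s.factorial * (m - s).factorial * (n - s).factorial)) * c s := by
  have hc : (adop : Module.End ℂ (ℕ →₀ ℂ)) * ((-(Complex.I * ℏ)) • (aop : Module.End ℂ (ℕ →₀ ℂ)))
      - ((-(Complex.I * ℏ)) • (aop : Module.End ℂ (ℕ →₀ ℂ))) * (adop : Module.End ℂ (ℕ →₀ ℂ))
      = (Complex.I * ℏ) • (1 : Module.End ℂ (ℕ →₀ ℂ)) := by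
    rw [← comm_aop]
    ext n k
    simp
    ring
  exact core_s1 (R := Module.End ℂ (ℕ →₀ ℂ)) ℏ adop ((-(Complex.I * ℏ)) • aop) hc adop_pow_ne hℏ g hg
    Φ (fun k A => map_smul Φ k A) hΦ hx hp

end
end

section
/- Let α : ℕ → ℂ be a sequence with α_0 = 1, define g_α(m,n,s) = (i/2)^s · (m!·n!/((m−s)!·(n−s)!)) · Σ_{k=0}^s (2i)^k · α_k/(s−k)!, and define the linear map Φ_α : ℂ[x,p] → End_ℂ(V) on the monomial basis by Φ_α(p^m x^n) = Σ_{s=0}^{min(m,n)} g_α(m,n,s) · ħ^s · F^{(m−s,n−s)}. Let Φ_W denote Φ_α for the trivial sequence α = (1,0,0,…), i.e. Φ_W(p^m x^n) = Σ_{s=0}^{min(m,n)} ((iħ)^s · m!·n!/(2^s·s!·(m−s)!·(n−s)!)) · F^{(m−s,n−s)}. Then Φ_α = Φ_W ∘ α̂, i.e. Φ_α(A) = Φ_W(α̂ A) for every polynomial A. -/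
open Complex MvPolynomial Finset

noncomputable section

/-- `g_α(m,n,s) = (i/2)^s (m!n!/((m−s)!(n−s)!)) Σ_{k=0}^s (2i)^k α_k/(s−k)!`. -/
def gα (α : ℕ → ℂ) (m n s : ℕ) : ℂ :=
  (Complex.I / 2) ^ s *
    ((m.factorial * n.factorial : ℂ) / ((m - s).factorial * (n - s).factorial)) *
    ∑ k ∈ Finset.range (s + 1), (2 * Complex.I) ^ k * α k / ((s - k).factorial : ℂ)

theorem DD_pow (m n k : ℕ) : ((Dx * Dp) ^ k) (pv ^ m * xv ^ n) =
    ((m.descFactorial k * n.descFactorial k : ℕ) : ℂ) • (pv ^ (m - k) * xv ^ (n - k)) := by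
  induction k with
  | zero => simp
  | succ k ih =>
    rw [pow_succ', Module.End.mul_apply, ih, map_smul]
    have h : ∀ a b : ℕ, (Dx * Dp) (pv ^ a * xv ^ b) =
        ((a * b : ℕ) : ℂ) • (pv ^ (a - 1) * xv ^ (b - 1)) := by
      intro a b
      simp only [Dx, Dp, pv, xv, Module.End.mul_apply, Derivation.coeFn_coe, Derivation.leibniz,
        Derivation.leibniz_pow, pderiv_X_self, smul_eq_mul, nsmul_eq_mul, map_add,
        pderiv_X_of_ne (show (0 : Fin 2) ≠ 1 by decide),
        pderiv_X_of_ne (show (1 : Fin 2) ≠ 0 by decide), Derivation.map_natCast, mul_zero,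
        zero_add, add_zero, mul_one, map_zero, MvPolynomial.smul_eq_C_mul]
      push_cast
      simp only [map_mul, map_natCast]
      ring
    rw [h, smul_smul, Nat.descFactorial_succ, Nat.descFactorial_succ, Nat.sub_sub, Nat.sub_sub]
    congr 1
    push_cast
    ring

theorem totalDeg (m n : ℕ) : (pv ^ m * xv ^ n).totalDegree = m + n := by
  have : pv ^ m * xv ^ n = monomial (Finsupp.single 1 m + Finsupp.single 0 n) (1 : ℂ) := by
    simp [pv, xv, X_pow_eq_monomial, monomial_mul]
  rw [this, totalDegree_monomial _ one_ne_zero, Finsupp.sum_add_index'] <;> simp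

theorem coeff_eq (h a : ℂ) (m n k j : ℕ) (hm : k + j ≤ m) (hn : k + j ≤ n) :
    a * (-h) ^ k * ((m.descFactorial k * n.descFactorial k : ℕ) : ℂ) *
      ((Complex.I * h) ^ j * ((m - k).factorial * (n - k).factorial : ℂ) /
          (2 ^ j * j.factorial * (m - k - j).factorial * (n - k - j).factorial)) =
    (Complex.I / 2) ^ (k + j) *
      ((m.factorial * n.factorial : ℂ) / ((m - (k + j)).factorial * (n - (k + j)).factorial)) *
      ((2 * Complex.I) ^ k * a / (j.factorial : ℂ)) * h ^ (k + j) := by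
  rw [← Nat.factorial_mul_descFactorial (show k ≤ m by omega),
    ← Nat.factorial_mul_descFactorial (show k ≤ n by omega), Nat.sub_sub, Nat.sub_sub]
  have h1 : (-h) ^ k = (Complex.I / 2) ^ k * (2 * Complex.I) ^ k * h ^ k := by
    rw [← mul_pow, ← mul_pow]
    congr 1
    linear_combination (-h) * Complex.I_mul_I
  have := fun q : ℕ => (Nat.cast_ne_zero (R := ℂ)).2 (Nat.factorial_ne_zero q)
  rw [h1, pow_add, pow_add, mul_pow Complex.I h j, div_pow Complex.I 2 j]
  have h2 := this j
  have h3 := this (m - (k + j))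
  have h4 := this (n - (k + j))
  push_cast
  generalize (Complex.I / 2) ^ k = u
  generalize (2 * Complex.I) ^ k = v
  field_simp

/-- `Φ_α = Φ_W ∘ α̂`, where `Φ_W` is the Weyl (Moyal) quantization map
`Φ_W(p^m x^n) = Σ_s ((iℏ)^s m!n!/(2^s s!(m−s)!(n−s)!)) F^{(m−s,n−s)}` and
`α̂ A = Σ_k α_k (−ℏ)^k (∂_x∂_p)^k A`. -/
theorem stmt5 (ℏ : ℝ) (hℏ : ℏ ≠ 0) (α : ℕ → ℂ) (hα : α 0 = 1)
    (T : Pxp →ₗ[ℂ] Pxp)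
    (hT : ∀ A : Pxp, T A = ∑ k ∈ Finset.range (A.totalDegree + 1),
      (α k * (-(ℏ : ℂ)) ^ k) • (((Dx * Dp) ^ k) A))
    (Φα : Pxp →ₗ[ℂ] Module.End ℂ (ℕ →₀ ℂ))
    (hΦα : ∀ m n : ℕ, Φα (pv ^ m * xv ^ n) =
      ∑ s ∈ Finset.range (min m n + 1), (gα α m n s * (ℏ : ℂ) ^ s) • F ℏ (m - s) (n - s))
    (ΦW : Pxp →ₗ[ℂ] Module.End ℂ (ℕ →₀ ℂ))
    (hΦW : ∀ m n : ℕ, ΦW (pv ^ m * xv ^ n) =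
      ∑ s ∈ Finset.range (min m n + 1),
        ((Complex.I * ℏ) ^ s * (m.factorial * n.factorial : ℂ) /
          (2 ^ s * s.factorial * (m - s).factorial * (n - s).factorial)) •
          F ℏ (m - s) (n - s)) :
    ∀ A : Pxp, Φα A = ΦW (T A) := by
  have key : ∀ m n : ℕ, Φα (pv ^ m * xv ^ n) = ΦW (T (pv ^ m * xv ^ n)) := by
    intro m n
    rw [hT, totalDeg, map_sum, hΦα]
    have hsub : Finset.range (min m n + 1) ⊆ Finset.range (m + n + 1) := by
      intro k
      simp only [Finset.mem_range]
      omega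
    rw [← Finset.sum_subset hsub]
    · have e1 : ∀ k ∈ Finset.range (min m n + 1),
          ΦW ((α k * (-(ℏ : ℂ)) ^ k) • (((Dx * Dp) ^ k) (pv ^ m * xv ^ n))) =
          ∑ j ∈ Finset.range (min m n + 1 - k),
            (α k * (-(ℏ : ℂ)) ^ k * ((m.descFactorial k * n.descFactorial k : ℕ) : ℂ) *
              ((Complex.I * ℏ) ^ j * ((m - k).factorial * (n - k).factorial : ℂ) /
              (2 ^ j * j.factorial * (m - k - j).factorial * (n - k - j).factorial))) •
              F ℏ (m - k - j) (n - k - j) := by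
        intro k hk
        have hk' := Finset.mem_range.1 hk
        rw [DD_pow, smul_smul, map_smul, hΦW, Finset.smul_sum,
          show min (m - k) (n - k) + 1 = min m n + 1 - k by omega]
        simp only [smul_smul]
      rw [Finset.sum_congr rfl e1, ← Finset.sum_range_diag_flip]
      refine Finset.sum_congr rfl fun s hs => ?_
      have hs' := Finset.mem_range.1 hs
      rw [gα, Finset.mul_sum, Finset.sum_mul, Finset.sum_smul]
      refine Finset.sum_congr rfl fun k hk => ?_
      have hk' := Finset.mem_range.1 hk
      obtain ⟨j, rfl⟩ := Nat.exists_eq_add_of_le (show k ≤ s by omega)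
      rw [Nat.add_sub_cancel_left, coeff_eq _ _ _ _ _ _ (by omega) (by omega), Nat.sub_sub,
        Nat.sub_sub]
    · intro k _ hk
      have hk' : m < k ∨ n < k := by
        simp only [Finset.mem_range] at hk
        omega
      rw [DD_pow]
      rcases hk' with h | h <;> simp [Nat.descFactorial_of_lt h]
  intro A
  induction A using MvPolynomial.induction_on' with
  | monomial u a =>
    have : monomial u a = a • (pv ^ (u 1) * xv ^ (u 0)) := by
      rw [monomial_eq, Finsupp.prod_fintype _ _ (by simp), Fin.prod_univ_two,
        MvPolynomial.smul_eq_C_mul, pv, xv]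
      ring
    rw [this, map_smul, key, map_smul, map_smul]
  | add p q hp hq => rw [map_add, hp, hq, map_add, map_add]

end
end

section
/- On the space W = ℕ → ℂ of all complex sequences, with the linear maps a, a† : W → W given by (a v)_n = √(n+1)·v_{n+1} and (a† v)_0 = 0, (a† v)_{n+1} = √(n+1)·v_n, the map G : W → W given componentwise by G v = Σ_{k=0}^∞ (1/(2^k · k!)) · ((a†)²)^k v is well defined (each component of G v is a finite sum, since (a†)² raises indices by 2), and it satisfies G ∘ a† = a† ∘ G and G ∘ a = (a − a†) ∘ G. Consequently G ∘ (a† + (1/2)·a) = ((1/2)·(a† + a)) ∘ G and G ∘ (−iħ·a) = (iħ·(a† − a)) ∘ G. -/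
open Complex

noncomputable section

/-- The destruction operator on the space `W = ℕ → ℂ` of all sequences:
`(a v)_n = √(n+1)·v_{n+1}`. -/
def aW : (ℕ → ℂ) →ₗ[ℂ] (ℕ → ℂ) where
  toFun v := fun n => ((Real.sqrt (n + 1) : ℝ) : ℂ) * v (n + 1)
  map_add' v w := by funext n; simp [mul_add]
  map_smul' c v := by funext n; simp; ring

/-- The creation operator on `W = ℕ → ℂ`: `(a† v)_0 = 0`, `(a† v)_{n+1} = √(n+1)·v_n`. -/
def adW : (ℕ → ℂ) →ₗ[ℂ] (ℕ → ℂ) where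
  toFun v := fun n => match n with
    | 0 => 0
    | k + 1 => ((Real.sqrt (k + 1) : ℝ) : ℂ) * v k
  map_add' v w := by funext n; cases n <;> simp [mul_add]
  map_smul' c v := by funext n; cases n <;> simp <;> ring

theorem adW_pow_zero (v : ℕ → ℂ) (m n : ℕ) (h : n < m) :
    (((adW : Module.End ℂ (ℕ → ℂ)) ^ m) v) n = 0 := by
  induction m generalizing n with
  | zero => omega
  | succ m ih =>
    rw [pow_succ', Module.End.mul_apply]
    cases n with
    | zero => rfl
    | succ n =>
      change ((Real.sqrt (n + 1) : ℝ) : ℂ) * _ = 0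
      rw [ih n (by omega), mul_zero]

theorem aW_sq (n : ℕ) : ((Real.sqrt (n + 1) : ℝ) : ℂ) * ((Real.sqrt (n + 1) : ℝ) : ℂ) = n + 1 := by
  rw [← Complex.ofReal_mul, Real.mul_self_sqrt (by positivity)]
  push_cast
  rfl

theorem aW_comm : (aW : Module.End ℂ (ℕ → ℂ)) * adW = (adW : Module.End ℂ (ℕ → ℂ)) * aW + 1 := by
  ext1 v
  funext n
  cases n with
  | zero =>
    change ((Real.sqrt ((0 : ℕ) + 1) : ℝ) : ℂ) * (((Real.sqrt ((0 : ℕ) + 1) : ℝ) : ℂ) * v 0) = 0 + v 0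
    simp
  | succ n =>
    change ((Real.sqrt ((n + 1 : ℕ) + 1) : ℝ) : ℂ) * (((Real.sqrt ((n + 1 : ℕ) + 1) : ℝ) : ℂ) * v (n + 1))
      = ((Real.sqrt (n + 1) : ℝ) : ℂ) * (((Real.sqrt (n + 1) : ℝ) : ℂ) * v (n + 1)) + v (n + 1)
    rw [← mul_assoc, ← mul_assoc, aW_sq, aW_sq]
    push_cast
    ring

theorem aW_comm_pow (m : ℕ) : (aW : Module.End ℂ (ℕ → ℂ)) * (adW : Module.End ℂ (ℕ → ℂ)) ^ (m + 1) =
    (adW : Module.End ℂ (ℕ → ℂ)) ^ (m + 1) * aW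
      + ((m : ℂ) + 1) • (adW : Module.End ℂ (ℕ → ℂ)) ^ m := by
  induction m with
  | zero => simp [aW_comm]
  | succ m ih =>
    rw [pow_succ _ (m + 1), ← mul_assoc, ih, add_mul, mul_assoc _ aW, aW_comm, mul_add, mul_one,
      smul_mul_assoc, ← pow_succ, ← mul_assoc]
    push_cast
    module

def SW (N : ℕ) : Module.End ℂ (ℕ → ℂ) :=
  ∑ k ∈ Finset.range N, ((1 : ℂ) / (2 ^ k * (k.factorial : ℂ))) •
    ((adW : Module.End ℂ (ℕ → ℂ)) ^ 2) ^ k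

theorem SW_apply (N : ℕ) (v : ℕ → ℂ) (n : ℕ) : SW N v n = ∑ k ∈ Finset.range N,
    ((1 : ℂ) / (2 ^ k * (k.factorial : ℂ))) * ((((adW : Module.End ℂ (ℕ → ℂ)) ^ 2) ^ k) v) n := by
  simp [SW, LinearMap.sum_apply, Finset.sum_apply]

theorem SW_stable (N : ℕ) (v : ℕ → ℂ) (n : ℕ) (h : n / 2 + 1 ≤ N) :
    SW (n / 2 + 1) v n = SW N v n := by
  rw [SW_apply, SW_apply]
  apply Finset.sum_subset
  · intro k hk
    simp only [Finset.mem_range] at *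
    omega
  · intro k _ hk
    simp only [Finset.mem_range] at hk
    rw [← pow_mul, adW_pow_zero v _ n (by omega), mul_zero]

theorem SW_ad (N : ℕ) : SW N * (adW : Module.End ℂ (ℕ → ℂ)) = (adW : Module.End ℂ (ℕ → ℂ)) * SW N := by
  rw [SW, Finset.sum_mul, Finset.mul_sum]
  refine Finset.sum_congr rfl fun k _ => ?_
  rw [smul_mul_assoc, mul_smul_comm, ← pow_mul, ← pow_succ, ← pow_succ']

theorem SW_a (N : ℕ) : (aW : Module.End ℂ (ℕ → ℂ)) * SW (N + 1) =
    SW (N + 1) * aW + (adW : Module.End ℂ (ℕ → ℂ)) * SW N := by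
  induction N with
  | zero => simp [SW]
  | succ N ih =>
    have e1 : SW (N + 1 + 1) = SW (N + 1) + ((1 : ℂ) / (2 ^ (N + 1) * ((N + 1).factorial : ℂ))) •
      ((adW : Module.End ℂ (ℕ → ℂ)) ^ 2) ^ (N + 1) := Finset.sum_range_succ _ _
    have e2 : SW (N + 1) = SW N + ((1 : ℂ) / (2 ^ N * (N.factorial : ℂ))) •
      ((adW : Module.End ℂ (ℕ → ℂ)) ^ 2) ^ N := Finset.sum_range_succ _ _
    have e3 : (adW : Module.End ℂ (ℕ → ℂ)) * SW (N + 1) = (adW : Module.End ℂ (ℕ → ℂ)) * SW N +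
      ((1 : ℂ) / (2 ^ N * (N.factorial : ℂ))) • (adW : Module.End ℂ (ℕ → ℂ)) ^ (2 * N + 1) := by
      rw [e2, mul_add, mul_smul_comm, ← pow_mul, ← pow_succ']
    have e4 : ((1 : ℂ) / (2 ^ N * (N.factorial : ℂ))) =
      ((1 : ℂ) / (2 ^ (N + 1) * ((N + 1).factorial : ℂ))) * (((2 * N + 1 : ℕ) : ℂ) + 1) := by
      have h1 : (N.factorial : ℂ) ≠ 0 := by exact_mod_cast N.factorial_ne_zero
      have h2 : (N : ℂ) + 1 ≠ 0 := by exact_mod_cast N.succ_ne_zero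
      rw [Nat.factorial_succ]
      push_cast
      field_simp
      ring
    rw [e3, e1, mul_add, ih, add_mul, mul_smul_comm, smul_mul_assoc, ← pow_mul,
      show 2 * (N + 1) = (2 * N + 1) + 1 by ring, aW_comm_pow, smul_add, smul_smul, e4]
    abel

def GW : Module.End ℂ (ℕ → ℂ) where
  toFun v := fun n => SW (n / 2 + 1) v n
  map_add' v w := by funext n; simp
  map_smul' c v := by funext n; simp

theorem GW_eq (N : ℕ) (v : ℕ → ℂ) (n : ℕ) (h : n / 2 + 1 ≤ N) : GW v n = SW N v n :=
  SW_stable N v n h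

theorem aGW (N : ℕ) (v : ℕ → ℂ) (n : ℕ) (h : n + 2 ≤ N) : aW (GW v) n = aW (SW N v) n := by
  change ((Real.sqrt (n + 1) : ℝ) : ℂ) * GW v (n + 1) = ((Real.sqrt (n + 1) : ℝ) : ℂ) * SW N v (n + 1)
  rw [GW_eq N v (n + 1) (by omega)]

theorem adGW (N : ℕ) (v : ℕ → ℂ) (n : ℕ) (h : n + 2 ≤ N) : adW (GW v) n = adW (SW N v) n := by
  cases n with
  | zero => rfl
  | succ n =>
    change ((Real.sqrt (n + 1) : ℝ) : ℂ) * GW v n = ((Real.sqrt (n + 1) : ℝ) : ℂ) * SW N v n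
    rw [GW_eq N v n (by omega)]

theorem GW_ad : GW * adW = (adW : Module.End ℂ (ℕ → ℂ)) * GW := by
  ext1 v
  funext n
  rw [Module.End.mul_apply, Module.End.mul_apply, adGW (n + 2) v n le_rfl,
    GW_eq (n + 2) _ n (by omega)]
  exact congrFun (LinearMap.congr_fun (SW_ad (n + 2)) v) n

theorem GW_a : GW * aW = ((aW : Module.End ℂ (ℕ → ℂ)) - adW) * GW := by
  ext1 v
  funext n
  rw [Module.End.mul_apply, Module.End.mul_apply, LinearMap.sub_apply, Pi.sub_apply,
    adGW (n + 2) v n le_rfl, aGW (n + 2 + 1) v n (by omega),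
    GW_eq (n + 2 + 1) _ n (by omega), eq_sub_iff_add_eq]
  exact (congrFun (LinearMap.congr_fun (SW_a (n + 2)) v) n).symm

/-- `(a†)²` raises indices by 2, so `G = Σ_k (1/(2^k k!)) ((a†)²)^k` is defined
componentwise by finite sums; it satisfies `G ∘ a† = a† ∘ G` and `G ∘ a = (a − a†) ∘ G`, hence
`G ∘ (a† + ½a) = ½(a† + a) ∘ G` and `G ∘ (−iℏa) = iℏ(a† − a) ∘ G`. -/
theorem stmt8 (ℏ : ℝ) (hℏ : ℏ ≠ 0) :
    (∀ (v : ℕ → ℂ) (n k : ℕ), n < 2 * k →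
      ((((adW : Module.End ℂ (ℕ → ℂ)) ^ 2) ^ k) v) n = 0) ∧
    ∃ G : Module.End ℂ (ℕ → ℂ),
      (∀ (v : ℕ → ℂ) (n : ℕ), (G v) n =
        ∑ k ∈ Finset.range (n / 2 + 1),
          ((1 : ℂ) / (2 ^ k * (k.factorial : ℂ))) *
            ((((adW : Module.End ℂ (ℕ → ℂ)) ^ 2) ^ k) v) n) ∧
      G * adW = adW * G ∧
      G * aW = ((aW : Module.End ℂ (ℕ → ℂ)) - adW) * G ∧
      G * ((adW : Module.End ℂ (ℕ → ℂ)) + (1 / 2 : ℂ) • (aW : Module.End ℂ (ℕ → ℂ))) =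
        ((1 / 2 : ℂ) • ((adW : Module.End ℂ (ℕ → ℂ)) + aW)) * G ∧
      G * ((-(Complex.I * ℏ)) • (aW : Module.End ℂ (ℕ → ℂ))) =
        ((Complex.I * ℏ) • ((adW : Module.End ℂ (ℕ → ℂ)) - aW)) * G := by
  refine ⟨fun v n k h => ?_, GW, fun v n => SW_apply _ v n, GW_ad, GW_a, ?_, ?_⟩
  · rw [← pow_mul]
    exact adW_pow_zero v _ n h
  · rw [mul_add, mul_smul_comm, GW_ad, GW_a, smul_mul_assoc, sub_mul, add_mul]
    module
  · rw [mul_smul_comm, GW_a, smul_mul_assoc, sub_mul, sub_mul]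
    module

end
end

section
/- For all m, n ∈ ℕ, the standard-ordering reordering identity holds in End_ℂ(V): (a†)^n ∘ (−iħ·a)^m = Σ_{s=0}^{min(m,n)} ((iħ)^s · m!·n!/(s!·(m−s)!·(n−s)!)) · F^{(m−s,n−s)}. -/
open Complex MvPolynomial Finset

noncomputable section

theorem comm_aux {A : Type*} [Ring A] [Algebra ℂ A] (P D : A) (k : ℂ)
    (h : D * P = P * D + k • (1 : A)) (j : ℕ) :
    D * P ^ j = P ^ j * D + ((j : ℂ) * k) • P ^ (j - 1) := by
  induction j with
  | zero => simp
  | succ j ih =>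
    rw [pow_succ, ← mul_assoc, ih, add_mul, mul_assoc, h, mul_add, smul_mul_assoc]
    have h2 : ((j : ℂ) * k) • (P ^ (j - 1) * P) = ((j : ℂ) * k) • P ^ j := by
      cases j with
      | zero => simp
      | succ j => rw [← pow_succ]; rfl
    rw [h2, mul_smul_comm, mul_one, Nat.add_sub_cancel, ← mul_assoc, add_assoc, ← add_smul]
    congr 2
    push_cast
    ring

theorem reorder_aux {A : Type*} [Ring A] [Algebra ℂ A] (P D : A) (k : ℂ)
    (h : D * P = P * D + k • (1 : A)) (m n : ℕ) :
    D ^ n * P ^ m = ∑ s ∈ Finset.range (n + 1),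
      (k ^ s * (m.descFactorial s : ℂ) * (n.choose s : ℂ)) • (P ^ (m - s) * D ^ (n - s)) := by
  induction n with
  | zero => simp
  | succ n ih =>
    rw [pow_succ', mul_assoc, ih, Finset.mul_sum]
    have h1 : ∀ s ∈ Finset.range (n + 1),
        D * ((k ^ s * (m.descFactorial s : ℂ) * (n.choose s : ℂ)) • (P ^ (m - s) * D ^ (n - s)))
        = (k ^ s * (m.descFactorial s : ℂ) * (n.choose s : ℂ)) • (P ^ (m - s) * D ^ (n + 1 - s))
        + (k ^ (s + 1) * (m.descFactorial (s + 1) : ℂ) * (n.choose s : ℂ)) •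
          (P ^ (m - (s + 1)) * D ^ (n - s)) := by
      intro s hs
      have hs' : n + 1 - s = (n - s) + 1 := by
        have := Finset.mem_range.1 hs
        omega
      rw [mul_smul_comm, ← mul_assoc, comm_aux P D k h, add_mul, smul_add, mul_assoc (P ^ (m - s)) D, ← pow_succ',
        ← hs', smul_mul_assoc, smul_smul, Nat.descFactorial_succ, Nat.sub_sub]
      congr 2
      push_cast
      ring
    rw [Finset.sum_congr rfl h1, Finset.sum_add_distrib, Finset.sum_range_succ' _ (n + 1)]
    have h2 : ∑ s ∈ Finset.range (n + 1),
        (k ^ s * (m.descFactorial s : ℂ) * (n.choose s : ℂ)) • (P ^ (m - s) * D ^ (n + 1 - s))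
        = ∑ s ∈ Finset.range (n + 1 + 1),
        (k ^ s * (m.descFactorial s : ℂ) * (n.choose s : ℂ)) • (P ^ (m - s) * D ^ (n + 1 - s)) := by
      rw [Finset.sum_range_succ _ (n + 1)]
      simp
    rw [h2, Finset.sum_range_succ' _ (n + 1), add_right_comm, ← Finset.sum_add_distrib]
    congr 1
    · refine Finset.sum_congr rfl fun s _ => ?_
      rw [Nat.add_sub_add_right, ← add_smul, Nat.choose_succ_succ]
      congr 1
      push_cast
      ring
    · simp

theorem ccr_aux : (aop : Module.End ℂ (ℕ →₀ ℂ)) * adop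
    = (adop : Module.End ℂ (ℕ →₀ ℂ)) * aop + 1 := by
  have hs : ∀ n : ℕ, ((Real.sqrt (n + 1) : ℝ) : ℂ) * ((Real.sqrt (n + 1) : ℝ) : ℂ) = n + 1 := by
    intro n
    rw [← Complex.ofReal_mul, Real.mul_self_sqrt (by positivity)]
    push_cast
    rfl
  refine Finsupp.lhom_ext' fun n => LinearMap.ext_ring ?_
  cases n with
  | zero => simp [aop, adop]
  | succ n =>
    have h1 := hs n
    have h2 := hs (n + 1)
    push_cast at h1 h2
    simp [aop, adop, h1, h2]

/-- the standard-ordering reordering identity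
`(a†)^n (−iℏa)^m = Σ_{s=0}^{min(m,n)} ((iℏ)^s m!n!/(s!(m−s)!(n−s)!)) F^{(m−s,n−s)}`. -/
theorem stmt11 (ℏ : ℝ) (hℏ : ℏ ≠ 0) (m n : ℕ) :
    (adop : Module.End ℂ (ℕ →₀ ℂ)) ^ n *
        ((-(Complex.I * ℏ)) • (aop : Module.End ℂ (ℕ →₀ ℂ))) ^ m =
      ∑ s ∈ Finset.range (min m n + 1),
        ((Complex.I * ℏ) ^ s * (m.factorial * n.factorial : ℂ) /
          (s.factorial * (m - s).factorial * (n - s).factorial)) • F ℏ (m - s) (n - s) := by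
  have hc : (adop : Module.End ℂ (ℕ →₀ ℂ)) * ((-(Complex.I * ℏ)) • (aop : Module.End ℂ (ℕ →₀ ℂ)))
      = ((-(Complex.I * ℏ)) • (aop : Module.End ℂ (ℕ →₀ ℂ))) * adop
        + (Complex.I * ℏ) • (1 : Module.End ℂ (ℕ →₀ ℂ)) := by
    rw [smul_mul_assoc, ccr_aux, mul_smul_comm, smul_add, add_assoc]
    have h0 : (-(Complex.I * ℏ)) • (1 : Module.End ℂ (ℕ →₀ ℂ)) + (Complex.I * ℏ) • (1 : Module.End ℂ (ℕ →₀ ℂ)) = 0 := by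
      refine LinearMap.ext fun x => ?_
      simp
    rw [h0, add_zero]
  refine (reorder_aux (A := Module.End ℂ (ℕ →₀ ℂ)) _ _ _ hc m n).trans ?_
  symm
  have hsub : Finset.range (min m n + 1) ⊆ Finset.range (n + 1) :=
    Finset.range_subset_range.2 (by omega)
  rw [← Finset.sum_subset hsub]
  · refine Finset.sum_congr rfl fun s hs => ?_
    have hs' := Finset.mem_range.1 hs
    have hm : s ≤ m := by omega
    have hn : s ≤ n := by omega
    unfold F
    congr 1
    have e1 : ((m - s).factorial : ℂ) * (m.descFactorial s : ℂ) = m.factorial := by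
      exact_mod_cast Nat.factorial_mul_descFactorial hm
    have e2 : (n.choose s : ℂ) * s.factorial * (n - s).factorial = n.factorial := by
      exact_mod_cast Nat.choose_mul_factorial_mul_factorial hn
    have f1 : (s.factorial : ℂ) ≠ 0 := by exact_mod_cast Nat.factorial_ne_zero _
    have f2 : ((m - s).factorial : ℂ) ≠ 0 := by exact_mod_cast Nat.factorial_ne_zero _
    have f3 : ((n - s).factorial : ℂ) ≠ 0 := by exact_mod_cast Nat.factorial_ne_zero _
    rw [← e1, ← e2]
    field_simp
  · intro s h1 h2
    have h1' := Finset.mem_range.1 h1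
    have h2' : ¬ s < min m n + 1 := fun h => h2 (Finset.mem_range.2 h)
    have : m.descFactorial s = 0 := Nat.descFactorial_eq_zero_iff_lt.2 (by omega)
    simp [this]

end
end
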